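/- Let X and Y be real normed vector spaces with X infinite-dimensional, let T : X → Y be a bounded linear operator, and let E be a dense linear subspace of X. Then Δ(T|_E) = Δ(T), where Δ(T|_E) is computed with E in place of X; i.e., the quantity Δ is densely invariant for bounded operators. -/

import Mathlib

/-- The operator norm of the restriction of `T` to a subspace `M`. -/
noncomputable def restrictedNorm {X Y : Type*} [NormedAddCommGroup X] [NormedSpace ℝ X]
    [NormedAddCommGroup Y] [NormedSpace ℝ Y] (T : X →L[ℝ] Y) (M : Submodule ℝ X) : ℝ :=
  ‖T.comp M.subtypeL‖

/-- `Γ(T) = inf_{M ∈ I(X)} ‖T|_M‖`, the infimum of the norms of the restrictions of `T`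
to infinite-dimensional subspaces of the domain. -/
noncomputable def opGamma {X Y : Type*} [NormedAddCommGroup X] [NormedSpace ℝ X]
    [NormedAddCommGroup Y] [NormedSpace ℝ Y] (T : X →L[ℝ] Y) : ℝ :=
  sInf {r : ℝ | ∃ M : Submodule ℝ X, ¬ FiniteDimensional ℝ M ∧ r = restrictedNorm T M}

/-- `Δ(T) = sup_{M ∈ I(X)} Γ(T|_M)`. -/
noncomputable def opDelta {X Y : Type*} [NormedAddCommGroup X] [NormedSpace ℝ X]
    [NormedAddCommGroup Y] [NormedSpace ℝ Y] (T : X →L[ℝ] Y) : ℝ :=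
  sSup {r : ℝ | ∃ M : Submodule ℝ X, ¬ FiniteDimensional ℝ M ∧
    r = opGamma (T.comp M.subtypeL)}

/-!
Enlarging the domain of `T` can only enlarge `Δ`, so the point is to move an infinite-dimensional
subspace `M` of `X` into `E` without losing much of `Γ`. Choose a biorthogonal sequence
`(xₙ, fₙ)` with `xₙ ∈ M` and approximate each `xₙ` by some `yₙ ∈ E` so closely that
`∑ ‖fₙ‖ ‖yₙ - xₙ‖ ≤ δ`. Since `fₙ` reads off the `n`-th coefficient of a combination of the `xₙ`,
replacing `xₙ` by `yₙ` moves every combination by at most `δ` times its norm. For `δ < 1` the span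
`N` of the `yₙ` is therefore infinite-dimensional, and `Γ(T|_M) ≤ (1 + δ) Γ(T|_N) + δ ‖T‖`; let
`δ → 0`.
-/

theorem not_finite_inf_ker {R X W : Type*} [Ring R] [AddCommGroup X] [Module R X]
    [AddCommGroup W] [Module R W] [IsNoetherian R W] {M : Submodule R X}
    (hM : ¬ Module.Finite R M) (g : X →ₗ[R] W) :
    ¬ Module.Finite R (M ⊓ LinearMap.ker g : Submodule R X) := by
  rw [Module.Finite.iff_fg] at hM ⊢
  exact mt (Submodule.fg_of_fg_map_of_fg_inf_ker g (IsNoetherian.noetherian _)) hM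

section Biorthogonal

variable {ι 𝕜 X : Type*}

/-- A family `x` of vectors and a family `f` of continuous functionals form a biorthogonal system:
`f i (x j)` is the Kronecker delta. The two cases are separated so that no decidable equality on
`ι` is needed. -/
def IsBiorthogonal [Semiring 𝕜] [TopologicalSpace 𝕜] [AddCommMonoid X] [TopologicalSpace X]
    [Module 𝕜 X] (x : ι → X) (f : ι → StrongDual 𝕜 X) : Prop :=
  (∀ i, f i (x i) = 1) ∧ Pairwise fun i j => f i (x j) = 0

section SeparatingDual

variable [Field 𝕜] [TopologicalSpace 𝕜] [IsTopologicalRing 𝕜] [AddCommGroup X]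
  [TopologicalSpace X] [Module 𝕜 X] [SeparatingDual 𝕜 X]

theorem exists_strongDual_eq_one_of_notMem (F : Submodule 𝕜 X) [FiniteDimensional 𝕜 F] {y : X}
    (hy : y ∉ F) : ∃ f : StrongDual 𝕜 X, f y = 1 ∧ ∀ x ∈ F, f x = 0 := by
  obtain ⟨g, hgy, hgF⟩ := F.exists_le_ker_of_notMem hy
  let W : Submodule 𝕜 X := F ⊔ 𝕜 ∙ y
  obtain ⟨f, hf⟩ :=
    (SeparatingDual.dualMap_surjective_iff (f := W.subtype)).2 W.injective_subtype
      (g.comp W.subtype)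
  have hfg : ∀ w ∈ W, f w = g w := fun w hw => LinearMap.congr_fun hf ⟨w, hw⟩
  have hfy : f y = g y := hfg y (Submodule.mem_sup_right (Submodule.mem_span_singleton_self y))
  refine ⟨(g y)⁻¹ • f, by simp [hfy, hgy], fun x hx => ?_⟩
  have hfx : f x = 0 := (hfg x (Submodule.mem_sup_left hx)).trans (hgF hx)
  simp [hfx]

theorem exists_isBiorthogonal_seq {M : Submodule 𝕜 X} (hM : ¬ FiniteDimensional 𝕜 M) :
    ∃ (x : ℕ → M) (f : ℕ → StrongDual 𝕜 X), IsBiorthogonal (fun n => (x n : X)) f := by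
  let r (p q : M × StrongDual 𝕜 X) : Prop := p.2 q.1 = 0 ∧ q.2 p.1 = 0
  have : Std.Symm r := ⟨fun _ _ => And.symm⟩
  obtain ⟨p, hp_one, hp_zero⟩ := exists_seq_of_forall_finset_exists'
      (fun p : M × StrongDual 𝕜 X => p.2 p.1 = 1) r fun s _ => by
    let g : X →ₗ[𝕜] (s → 𝕜) := LinearMap.pi fun p => (p.1.2 : X →ₗ[𝕜] 𝕜)
    let F : Submodule 𝕜 X := Submodule.span 𝕜 (Set.range fun p : s => (p.1.1 : X))
    have : FiniteDimensional 𝕜 F := .span_of_finite 𝕜 (Set.finite_range _)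
    have hker : ¬ M ⊓ LinearMap.ker g ≤ F := fun hle =>
      not_finite_inf_ker hM g (Submodule.finiteDimensional_of_le hle)
    obtain ⟨y, ⟨hyM, hyg⟩, hyF⟩ := SetLike.not_le_iff_exists.1 hker
    obtain ⟨f, hfy, hfF⟩ := exists_strongDual_eq_one_of_notMem F hyF
    exact ⟨(⟨y, hyM⟩, f), hfy, fun q hq =>
      ⟨congrFun (LinearMap.mem_ker.1 hyg) ⟨q, hq⟩, hfF _ (Submodule.subset_span ⟨⟨q, hq⟩, rfl⟩)⟩⟩
  exact ⟨fun n => (p n).1, fun n => (p n).2, hp_one, fun _ _ hmn => (hp_zero hmn).1⟩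

end SeparatingDual

namespace IsBiorthogonal

theorem apply_linearCombination [Semiring 𝕜] [TopologicalSpace 𝕜] [AddCommMonoid X]
    [TopologicalSpace X] [Module 𝕜 X] {x : ι → X} {f : ι → StrongDual 𝕜 X}
    (h : IsBiorthogonal x f) (c : ι →₀ 𝕜) (i : ι) :
    f i (Finsupp.linearCombination 𝕜 x c) = c i := by
  suffices (f i : X →ₗ[𝕜] 𝕜) ∘ₗ Finsupp.linearCombination 𝕜 x = Finsupp.lapply i from
    LinearMap.congr_fun this c
  ext j
  obtain rfl | hij := eq_or_ne i j
  · simp [h.1 i]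
  · simp [h.2 hij, hij]

variable [NontriviallyNormedField 𝕜] [SeminormedAddCommGroup X] [NormedSpace 𝕜 X]
  {x y : ι → X} {f : ι → StrongDual 𝕜 X}

theorem norm_coeff_le (h : IsBiorthogonal x f) (c : ι →₀ 𝕜) (i : ι) :
    ‖c i‖ ≤ ‖f i‖ * ‖Finsupp.linearCombination 𝕜 x c‖ :=
  h.apply_linearCombination c i ▸ (f i).le_opNorm _

theorem norm_linearCombination_sub_le (h : IsBiorthogonal x f)
    (hs : Summable fun i => ‖f i‖ * ‖y i - x i‖) (c : ι →₀ 𝕜) :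
    ‖Finsupp.linearCombination 𝕜 y c - Finsupp.linearCombination 𝕜 x c‖ ≤
      (∑' i, ‖f i‖ * ‖y i - x i‖) * ‖Finsupp.linearCombination 𝕜 x c‖ := by
  set v := Finsupp.linearCombination 𝕜 x c
  calc ‖Finsupp.linearCombination 𝕜 y c - v‖
      = ‖∑ i ∈ c.support, c i • (y i - x i)‖ := by
        simp [v, Finsupp.linearCombination_apply, Finsupp.sum, smul_sub]
    _ ≤ ∑ i ∈ c.support, ‖c i‖ * ‖y i - x i‖ := by
        simpa only [norm_smul] using norm_sum_le c.support fun i => c i • (y i - x i)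
    _ ≤ ∑ i ∈ c.support, ‖f i‖ * ‖v‖ * ‖y i - x i‖ := by
        gcongr with i
        exact h.norm_coeff_le c i
    _ = (∑ i ∈ c.support, ‖f i‖ * ‖y i - x i‖) * ‖v‖ := by
        simp only [Finset.sum_mul, mul_right_comm]
    _ ≤ (∑' i, ‖f i‖ * ‖y i - x i‖) * ‖v‖ := by
        gcongr
        exact hs.sum_le_tsum _ fun i _ => by positivity

theorem linearIndependent_of_tsum_lt_one (h : IsBiorthogonal x f)
    (hs : Summable fun i => ‖f i‖ * ‖y i - x i‖) (hlt : ∑' i, ‖f i‖ * ‖y i - x i‖ < 1) :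
    LinearIndependent 𝕜 y := by
  refine linearIndependent_iff.2 fun c hc => ?_
  have hle := h.norm_linearCombination_sub_le hs c
  rw [hc, zero_sub, norm_neg] at hle
  have hx : ‖Finsupp.linearCombination 𝕜 x c‖ = 0 := by
    by_contra hne
    exact hle.not_gt (mul_lt_of_lt_one_left (lt_of_le_of_ne' (norm_nonneg _) hne) hlt)
  ext i
  simpa [hx] using h.norm_coeff_le c i

end IsBiorthogonal

end Biorthogonal

section Perturbation

variable {ι 𝕜 X : Type*} [NontriviallyNormedField 𝕜] [SeminormedAddCommGroup X]
  [NormedSpace 𝕜 X] {δ : ℝ}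

theorem exists_mem_dense_tsum_mul_norm_sub_le [Countable ι] {s : Set X} (hs : Dense s) (x : ι → X)
    (a : ι → ℝ) (ha : ∀ i, 0 ≤ a i) (hδ : 0 < δ) :
    ∃ y : ι → s, Summable (fun i => a i * ‖(y i : X) - x i‖) ∧
      ∑' i, a i * ‖(y i : X) - x i‖ ≤ δ := by
  have := Encodable.ofCountable ι
  obtain ⟨ε, hε, σ, hσ, hσδ⟩ := posSumOfEncodable hδ ι
  have exists_near (i : ι) : ∃ y : s, a i * ‖(y : X) - x i‖ ≤ ε i := by
    have ha' : 0 < a i + 1 := by linarith [ha i]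
    obtain ⟨y, hy, hdist⟩ := hs.exists_dist_lt (x i) (div_pos (hε i) ha')
    rw [dist_comm, dist_eq_norm, lt_div_iff₀' ha'] at hdist
    exact ⟨⟨y, hy⟩, by dsimp only; linarith [norm_nonneg (y - x i)]⟩
  choose y hy using exists_near
  have hsum : Summable fun i => a i * ‖(y i : X) - x i‖ :=
    .of_nonneg_of_le (fun i => mul_nonneg (ha i) (norm_nonneg _)) hy hσ.summable
  exact ⟨y, hsum, (hsum.tsum_le_tsum hy hσ.summable).trans (hσ.tsum_eq.trans_le hσδ)⟩

theorem exists_linearMap_norm_sub_le_of_dense [SeparatingDual 𝕜 X] {E M : Submodule 𝕜 X}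
    (hE : Dense (E : Set X)) (hM : ¬ FiniteDimensional 𝕜 M) (hδ : 0 < δ) :
    ∃ (N : Submodule 𝕜 E) (φ : N →ₗ[𝕜] M), ¬ FiniteDimensional 𝕜 N ∧
      ∀ z : N, ‖((z : E) : X) - φ z‖ ≤ δ * ‖φ z‖ := by
  obtain ⟨x, f, hxf⟩ := exists_isBiorthogonal_seq hM
  obtain ⟨y, hs, hsδ⟩ := exists_mem_dense_tsum_mul_norm_sub_le hE (fun n => (x n : X))
    (fun n => ‖f n‖) (fun n => norm_nonneg _) (lt_min hδ one_half_pos)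
  have hy : LinearIndependent 𝕜 (y : ℕ → E) :=
    .of_comp E.subtype (hxf.linearIndependent_of_tsum_lt_one hs
      ((hsδ.trans (min_le_right _ _)).trans_lt one_half_lt_one))
  let e := hy.linearCombinationEquiv
  refine ⟨Submodule.span 𝕜 (Set.range y), Finsupp.linearCombination 𝕜 x ∘ₗ e.symm,
    fun _ => ?_, e.surjective.forall.2 fun c => ?_⟩
  · simpa [not_subsingleton, Infinite.not_finite] using
      Module.finite_finsupp_self_iff.1 (Module.Finite.equiv e.symm)
  · have hMc : (Finsupp.linearCombination 𝕜 x c : X) = _ :=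
      Finsupp.apply_linearCombination 𝕜 M.subtype x c
    have hEc : (Finsupp.linearCombination 𝕜 y c : X) = _ :=
      Finsupp.apply_linearCombination 𝕜 E.subtype y c
    have hle := (hxf.norm_linearCombination_sub_le hs c).trans
      (mul_le_mul_of_nonneg_right (hsδ.trans (min_le_left _ _)) (norm_nonneg _))
    simpa [e, hMc, hEc, Function.comp_def, ← Submodule.norm_coe] using hle

end Perturbation

section GammaDelta

variable {X Y Z W : Type*} [NormedAddCommGroup X] [NormedSpace ℝ X] [NormedAddCommGroup Y]
  [NormedSpace ℝ Y] [NormedAddCommGroup Z] [NormedSpace ℝ Z] [NormedAddCommGroup W]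
  [NormedSpace ℝ W]

theorem restrictedNorm_nonneg (T : X →L[ℝ] Y) (M : Submodule ℝ X) : 0 ≤ restrictedNorm T M :=
  norm_nonneg (T.comp M.subtypeL)

theorem restrictedNorm_le_bound (T : X →L[ℝ] Y) {M : Submodule ℝ X} {C : ℝ} (hC : 0 ≤ C)
    (h : ∀ x ∈ M, ‖T x‖ ≤ C * ‖x‖) : restrictedNorm T M ≤ C :=
  ContinuousLinearMap.opNorm_le_bound _ hC fun x => h x x.2

theorem restrictedNorm_le_norm (T : X →L[ℝ] Y) (M : Submodule ℝ X) : restrictedNorm T M ≤ ‖T‖ :=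
  restrictedNorm_le_bound T (norm_nonneg T) fun x _ => T.le_opNorm x

theorem norm_apply_le_restrictedNorm_mul (T : X →L[ℝ] Y) {M : Submodule ℝ X} {x : X}
    (hx : x ∈ M) : ‖T x‖ ≤ restrictedNorm T M * ‖x‖ :=
  (T.comp M.subtypeL).le_opNorm ⟨x, hx⟩

theorem opGamma_nonneg (T : X →L[ℝ] Y) : 0 ≤ opGamma T := by
  refine Real.sInf_nonneg ?_
  rintro _ ⟨M, -, rfl⟩
  exact restrictedNorm_nonneg T M

theorem opGamma_le_restrictedNorm (T : X →L[ℝ] Y) {M : Submodule ℝ X}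
    (hM : ¬ FiniteDimensional ℝ M) : opGamma T ≤ restrictedNorm T M := by
  refine csInf_le ⟨0, ?_⟩ ⟨M, hM, rfl⟩
  rintro _ ⟨V, -, rfl⟩
  exact restrictedNorm_nonneg T V

theorem opGamma_le_norm (hX : ¬ FiniteDimensional ℝ X) (T : X →L[ℝ] Y) : opGamma T ≤ ‖T‖ :=
  (opGamma_le_restrictedNorm T (M := ⊤)
    fun _ => hX (Module.Finite.equiv Submodule.topEquiv)).trans (restrictedNorm_le_norm T ⊤)

theorem le_opGamma (hX : ¬ FiniteDimensional ℝ X) {T : X →L[ℝ] Y} {c : ℝ}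
    (h : ∀ M : Submodule ℝ X, ¬ FiniteDimensional ℝ M → c ≤ restrictedNorm T M) :
    c ≤ opGamma T := by
  refine le_csInf ⟨_, ⊤, fun h => hX (Module.Finite.equiv Submodule.topEquiv), rfl⟩ ?_
  rintro _ ⟨M, hM, rfl⟩
  exact h M hM

theorem opGamma_le_mul_opGamma_add {T : X →L[ℝ] Y} {S : Z →L[ℝ] W} (hZ : ¬ FiniteDimensional ℝ Z)
    {φ : Z →ₗ[ℝ] X} {a b : ℝ} (ha : 0 < a) (hb : 0 ≤ b) (hnorm : ∀ z, ‖z‖ ≤ a * ‖φ z‖)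
    (hTS : ∀ z, ‖T (φ z)‖ ≤ ‖S z‖ + b * ‖φ z‖) :
    opGamma T ≤ a * opGamma S + b := by
  have hφ : Function.Injective φ := (injective_iff_map_eq_zero φ).2 fun z hz =>
    norm_le_zero_iff.1 (by simpa [hz] using hnorm z)
  rw [← sub_le_iff_le_add, ← div_le_iff₀' ha]
  refine le_opGamma hZ fun V hV => ?_
  rw [div_le_iff₀' ha, sub_le_iff_le_add]
  have hφV : ¬ FiniteDimensional ℝ (V.map φ) := fun _ =>
    hV (Module.Finite.equiv (V.equivMapOfInjective φ hφ).symm)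
  have hS := restrictedNorm_nonneg S V
  refine (opGamma_le_restrictedNorm T hφV).trans (restrictedNorm_le_bound T (by positivity) ?_)
  rintro _ ⟨z, hz, rfl⟩
  calc ‖T (φ z)‖ ≤ ‖S z‖ + b * ‖φ z‖ := hTS z
    _ ≤ restrictedNorm S V * ‖z‖ + b * ‖φ z‖ := by
        gcongr
        exact norm_apply_le_restrictedNorm_mul S hz
    _ ≤ restrictedNorm S V * (a * ‖φ z‖) + b * ‖φ z‖ := by
        gcongr
        exact hnorm z
    _ = (a * restrictedNorm S V + b) * ‖φ z‖ := by ring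

theorem opGamma_comp_le_of_norm_sub_le (T : X →L[ℝ] Y) (hZ : ¬ FiniteDimensional ℝ Z)
    {i : Z →ₗᵢ[ℝ] X} {j : W →ₗᵢ[ℝ] X} {φ : Z →ₗ[ℝ] W} {δ : ℝ} (hδ : 0 ≤ δ)
    (h : ∀ z, ‖i z - j (φ z)‖ ≤ δ * ‖φ z‖) :
    opGamma (T.comp j.toContinuousLinearMap) ≤
      (1 + δ) * opGamma (T.comp i.toContinuousLinearMap) + ‖T‖ * δ := by
  refine opGamma_le_mul_opGamma_add hZ (φ := φ) (by positivity) (by positivity) (fun z => ?_)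
    fun z => ?_
  · calc ‖z‖ = ‖i z‖ := (i.norm_map z).symm
      _ ≤ ‖j (φ z)‖ + ‖i z - j (φ z)‖ := norm_le_norm_add_norm_sub' _ _
      _ ≤ ‖φ z‖ + δ * ‖φ z‖ := add_le_add (j.norm_map _).le (h z)
      _ = (1 + δ) * ‖φ z‖ := by ring
  · calc ‖T (j (φ z))‖ ≤ ‖T (i z)‖ + ‖T (i z) - T (j (φ z))‖ := norm_le_norm_add_norm_sub _ _
      _ ≤ ‖T (i z)‖ + ‖T‖ * (δ * ‖φ z‖) := by
          rw [← map_sub]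
          gcongr
          exact T.le_opNorm_of_le (h z)
      _ = ‖T (i z)‖ + ‖T‖ * δ * ‖φ z‖ := by ring

theorem opDelta_nonneg (T : X →L[ℝ] Y) : 0 ≤ opDelta T := by
  refine Real.sSup_nonneg ?_
  rintro _ ⟨M, -, rfl⟩
  exact opGamma_nonneg _

theorem opGamma_comp_subtypeL_le_opDelta (T : X →L[ℝ] Y) {M : Submodule ℝ X}
    (hM : ¬ FiniteDimensional ℝ M) : opGamma (T.comp M.subtypeL) ≤ opDelta T := by
  refine le_csSup ⟨‖T‖, ?_⟩ ⟨M, hM, rfl⟩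
  rintro _ ⟨V, hV, rfl⟩
  exact (opGamma_le_norm hV _).trans (restrictedNorm_le_norm T V)

theorem opDelta_le {T : X →L[ℝ] Y} {C : ℝ} (hC : 0 ≤ C)
    (h : ∀ M : Submodule ℝ X, ¬ FiniteDimensional ℝ M → opGamma (T.comp M.subtypeL) ≤ C) :
    opDelta T ≤ C := by
  refine Real.sSup_le ?_ hC
  rintro _ ⟨M, hM, rfl⟩
  exact h M hM

theorem opDelta_comp_linearIsometry_le (T : X →L[ℝ] Y) (i : Z →ₗᵢ[ℝ] X) :
    opDelta (T.comp i.toContinuousLinearMap) ≤ opDelta T := by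
  refine opDelta_le (opDelta_nonneg T) fun M hM => ?_
  let e : M ≃ₗ[ℝ] M.map i.toLinearMap := M.equivMapOfInjective i.toLinearMap i.injective
  have hiM : ¬ FiniteDimensional ℝ (M.map i.toLinearMap) := fun _ =>
    hM (Module.Finite.equiv e.symm)
  have he (w) : i (e.symm w) = (w : X) := congrArg Subtype.val (e.apply_symm_apply w)
  calc opGamma ((T.comp i.toContinuousLinearMap).comp M.subtypeL)
      ≤ (1 + 0) * opGamma (T.comp (M.map i.toLinearMap).subtypeL) + ‖T‖ * 0 :=
        opGamma_comp_le_of_norm_sub_le T hiM (i := (M.map i.toLinearMap).subtypeₗᵢ)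
          (j := i.comp M.subtypeₗᵢ) (φ := e.symm) le_rfl fun w => by simp [he]
    _ = opGamma (T.comp (M.map i.toLinearMap).subtypeL) := by ring
    _ ≤ opDelta T := opGamma_comp_subtypeL_le_opDelta T hiM

theorem opGamma_comp_subtypeL_le_opDelta_of_dense (T : X →L[ℝ] Y) {E M : Submodule ℝ X}
    (hE : Dense (E : Set X)) (hM : ¬ FiniteDimensional ℝ M) :
    opGamma (T.comp M.subtypeL) ≤ opDelta (T.comp E.subtypeL) := by
  set D := opDelta (T.comp E.subtypeL)
  have le_of_pos {δ : ℝ} (hδ : 0 < δ) :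
      opGamma (T.comp M.subtypeL) ≤ (1 + δ) * D + ‖T‖ * δ := by
    obtain ⟨N, φ, hN, hnear⟩ := exists_linearMap_norm_sub_le_of_dense hE hM hδ
    calc opGamma (T.comp M.subtypeL)
        ≤ (1 + δ) * opGamma ((T.comp E.subtypeL).comp N.subtypeL) + ‖T‖ * δ :=
          opGamma_comp_le_of_norm_sub_le T hN (i := E.subtypeₗᵢ.comp N.subtypeₗᵢ)
            (j := M.subtypeₗᵢ) hδ.le hnear
      _ ≤ (1 + δ) * D + ‖T‖ * δ := by
          gcongr
          exact opGamma_comp_subtypeL_le_opDelta _ hN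
  have tendsto_bound : Filter.Tendsto (fun δ : ℝ => (1 + δ) * D + ‖T‖ * δ)
      (nhdsWithin 0 (Set.Ioi 0)) (nhds D) := by
    refine Filter.Tendsto.mono_left ?_ nhdsWithin_le_nhds
    exact Continuous.tendsto' (by fun_prop) _ _ (by simp)
  refine ge_of_tendsto tendsto_bound ?_
  filter_upwards [self_mem_nhdsWithin] with δ hδ using le_of_pos hδ

end GammaDelta

/-- `Δ` is densely invariant: `Δ(T|_E) = Δ(T)` for any dense subspace `E`. -/
theorem delta_densely_invariant {X Y : Type*} [NormedAddCommGroup X] [NormedSpace ℝ X]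
    [NormedAddCommGroup Y] [NormedSpace ℝ Y] (hX : ¬ FiniteDimensional ℝ X)
    (T : X →L[ℝ] Y) (E : Submodule ℝ X) (hE : Dense (E : Set X)) :
    opDelta (T.comp E.subtypeL) = opDelta T := by
  apply le_antisymm
  · exact opDelta_comp_linearIsometry_le T E.subtypeₗᵢ
  · exact opDelta_le (opDelta_nonneg _) fun M hM =>
      opGamma_comp_subtypeL_le_opDelta_of_dense T hE hM
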